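/- arXiv:2107.11890 — 2 statements merged into one kernel-verified Lean document; each statement's English description precedes it below -/
import Mathlib

section
/- Let {X_𝔞}_{𝔞∈[𝔞₋,𝔞₊]} be a scale of Banach spaces, F an Ovsjannikov map of order q ≥ 0 and constant L > 0 on it, T > 0, x₀ ∈ X_{𝔞₋}, and let ℐ(f)(t) = x₀ + ∫₀ᵗ F(f(s)) ds. Then for every n ∈ ℕ the n-fold iterate ℐⁿ maps C([0,T], X_{𝔞₋}) into ⋂_{𝔞∈(𝔞₋,𝔞₊)} C([0,T], X_𝔞): for every continuous f : [0,T] → X_{𝔞₋} and every 𝔞 ∈ (𝔞₋, 𝔞₊), the map ℐⁿ(f) : [0,T] → X_𝔞 is well defined and continuous. -/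
open MeasureTheory Set Filter ENNReal

noncomputable section

/-- `f : [0,T] → X_a` is continuous, where `X_a` is the subspace of the ambient Banach
space `E` on which the extended norm `N a` is finite, with the metric induced by `N a`. -/
def ScaleContOn {E : Type*} [NormedAddCommGroup E]
    (N : ℝ → E → ℝ≥0∞) (a T : ℝ) (f : ℝ → E) : Prop :=
  (∀ t ∈ Icc (0 : ℝ) T, N a (f t) ≠ ⊤) ∧
  ∀ t₀ ∈ Icc (0 : ℝ) T,
    Tendsto (fun t => N a (f t - f t₀)) (nhdsWithin t₀ (Icc (0 : ℝ) T)) (nhds 0)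

/-- The map `ℐ(f)(t) = x₀ + ∫₀ᵗ F(f(s)) ds` (Bochner integral in the ambient space). -/
def Imap {E : Type*} [NormedAddCommGroup E] [NormedSpace ℝ E] [CompleteSpace E]
    (F : E → E) (x₀ : E) (f : ℝ → E) : ℝ → E :=
  fun t => x₀ + ∫ s in (0 : ℝ)..t, F (f s)

universe u

def XSp {E : Type u} [AddCommGroup E] [Module ℝ E] (p : Submodule ℝ E) : Type u := p

instance {E : Type u} [AddCommGroup E] [Module ℝ E] (p : Submodule ℝ E) : AddCommGroup (XSp p) :=
  inferInstanceAs (AddCommGroup p)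

instance {E : Type u} [AddCommGroup E] [Module ℝ E] (p : Submodule ℝ E) : Module ℝ (XSp p) :=
  inferInstanceAs (Module ℝ p)

def XSp.incl {E : Type u} [AddCommGroup E] [Module ℝ E] (p : Submodule ℝ E) : XSp p →ₗ[ℝ] E :=
  p.subtype

theorem XSp.incl_inj {E : Type u} [AddCommGroup E] [Module ℝ E] (p : Submodule ℝ E) :
    Function.Injective (XSp.incl p) := p.injective_subtype

theorem XSp.incl_mem {E : Type u} [AddCommGroup E] [Module ℝ E] (p : Submodule ℝ E) (x : XSp p) :
    XSp.incl p x ∈ p := Subtype.property (p := fun x => x ∈ p) x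

theorem XSp.exists_incl {E : Type u} [AddCommGroup E] [Module ℝ E] (p : Submodule ℝ E) (x : E)
    (hx : x ∈ p) : ∃ v : XSp p, XSp.incl p v = x := ⟨(⟨x, hx⟩ : p), rfl⟩

theorem exists_space (E : Type u) [NormedAddCommGroup E] [NormedSpace ℝ E]
    (M : E → ℝ≥0∞) (hle : ∀ x, (‖x‖₊ : ℝ≥0∞) ≤ M x)
    (hzero : M 0 = 0)
    (hadd : ∀ x y : E, M (x + y) ≤ M x + M y)
    (hsmul : ∀ (c : ℝ) (x : E), M (c • x) = (‖c‖₊ : ℝ≥0∞) * M x)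
    (hcomplete : ∀ u : ℕ → E,
      (∀ n, M (u n) ≠ ⊤) →
      (∀ ε : ℝ≥0∞, 0 < ε → ∃ K : ℕ, ∀ m ≥ K, ∀ n ≥ K, M (u m - u n) < ε) →
      ∃ x : E, M x ≠ ⊤ ∧ Tendsto (fun n => M (u n - x)) atTop (nhds 0)) :
    ∃ (V : Type u) (_ : NormedAddCommGroup V) (_ : NormedSpace ℝ V) (_ : CompleteSpace V)
      (i : V →L[ℝ] E), (∀ v, ‖v‖ₑ = M (i v)) ∧ ∀ x, M x ≠ ⊤ → ∃ v, i v = x := by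
  let p : Submodule ℝ E :=
    { carrier := {x | M x ≠ ⊤}
      zero_mem' := by simp [hzero]
      add_mem' := fun {x y} hx hy => ne_top_of_le_ne_top (ENNReal.add_ne_top.2 ⟨hx, hy⟩) (hadd x y)
      smul_mem' := fun c x hx => by
        change M (c • x) ≠ ⊤
        rw [hsmul]
        exact ENNReal.mul_ne_top ENNReal.coe_ne_top hx }
  have hfin : ∀ v : XSp p, M (XSp.incl p v) ≠ ⊤ := fun v => XSp.incl_mem p v
  letI : Norm (XSp p) := ⟨fun v => (M (XSp.incl p v)).toReal⟩
  have hn : ∀ v : XSp p, ‖v‖ = (M (XSp.incl p v)).toReal := fun v => rfl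
  have hnle : ∀ v : XSp p, ‖XSp.incl p v‖ ≤ ‖v‖ := fun v => by
    have := ENNReal.toReal_mono (hfin v) (hle (XSp.incl p v))
    simpa [hn] using this
  have core : NormedSpace.Core ℝ (XSp p) :=
    { norm_nonneg := fun v => ENNReal.toReal_nonneg
      norm_smul := fun c v => by simp [hn, hsmul]
      norm_triangle := fun v w => by
        rw [hn, hn, hn, ← ENNReal.toReal_add (hfin v) (hfin w), map_add]
        exact ENNReal.toReal_mono (ENNReal.add_ne_top.2 ⟨hfin v, hfin w⟩) (hadd _ _)
      norm_eq_zero_iff := fun v => by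
        constructor
        · intro h
          apply XSp.incl_inj p
          have := hnle v
          rw [h] at this
          rw [map_zero]
          exact norm_le_zero_iff.1 this
        · rintro rfl
          simp [hn, hzero] }
  letI I1 : NormedAddCommGroup (XSp p) := NormedAddCommGroup.ofCore core
  letI I2 : NormedSpace ℝ (XSp p) := NormedSpace.ofCore core
  have hen : ∀ v : XSp p, ‖v‖ₑ = M (XSp.incl p v) := fun v => by
    rw [← ofReal_norm_eq_enorm]
    exact ENNReal.ofReal_toReal (hfin v)
  have hcs : CompleteSpace (XSp p) := by
    apply Metric.complete_of_cauchySeq_tendsto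
    intro u hu
    obtain ⟨x, hx, hxt⟩ := hcomplete (fun n => XSp.incl p (u n)) (fun n => hfin _) (by
      intro ε hε
      obtain ⟨K, hK⟩ := EMetric.cauchySeq_iff.1 hu ε hε
      refine ⟨K, fun m hm n hn' => ?_⟩
      have := hK m hm n hn'
      rwa [edist_eq_enorm_sub, hen, map_sub] at this)
    obtain ⟨v, rfl⟩ := XSp.exists_incl p x hx
    refine ⟨v, ?_⟩
    rw [tendsto_iff_edist_tendsto_0]
    simpa only [edist_eq_enorm_sub, hen, map_sub] using hxt
  refine ⟨XSp p, I1, I2, hcs, (XSp.incl p).mkContinuous 1 (fun v => by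
    rw [one_mul]; exact hnle v), hen, fun x hx => XSp.exists_incl p x hx⟩

theorem cont_step (E : Type u) [NormedAddCommGroup E] [NormedSpace ℝ E] [CompleteSpace E]
    (V : Type u) [NormedAddCommGroup V] [NormedSpace ℝ V] [CompleteSpace V]
    (M : E → ℝ≥0∞) (i : V →L[ℝ] E) (hM : ∀ v, ‖v‖ₑ = M (i v)) (hex : ∀ x, M x ≠ ⊤ → ∃ v, i v = x)
    (T : ℝ) (x₀ : E) (hx₀ : M x₀ ≠ ⊤) (g : ℝ → E)
    (hg : ∀ t ∈ Icc (0 : ℝ) T, M (g t) ≠ ⊤)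
    (hgc : ∀ t₀ ∈ Icc (0 : ℝ) T,
      Tendsto (fun t => M (g t - g t₀)) (nhdsWithin t₀ (Icc (0 : ℝ) T)) (nhds 0)) :
    (∀ t ∈ Icc (0 : ℝ) T, M (x₀ + ∫ s in (0 : ℝ)..t, g s) ≠ ⊤) ∧
    ∀ t₀ ∈ Icc (0 : ℝ) T,
      Tendsto (fun t => M ((x₀ + ∫ s in (0 : ℝ)..t, g s) - (x₀ + ∫ s in (0 : ℝ)..t₀, g s)))
        (nhdsWithin t₀ (Icc (0 : ℝ) T)) (nhds 0) := by
  obtain ⟨w, rfl⟩ := hex _ hx₀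
  have hv : ∀ t, ∃ v : V, t ∈ Icc (0 : ℝ) T → i v = g t := fun t => by
    by_cases ht : t ∈ Icc (0 : ℝ) T
    · obtain ⟨v, hv⟩ := hex _ (hg t ht)
      exact ⟨v, fun _ => hv⟩
    · exact ⟨0, fun h => absurd h ht⟩
  choose v hv using hv
  have hvc : ContinuousOn v (Icc 0 T) := by
    intro t₀ ht₀
    unfold ContinuousWithinAt
    rw [tendsto_iff_edist_tendsto_0]
    refine (hgc t₀ ht₀).congr' ?_
    filter_upwards [self_mem_nhdsWithin] with t ht
    rw [edist_eq_enorm_sub, hM, map_sub, hv t ht, hv t₀ ht₀]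
  have hint : ∀ t ∈ Icc (0 : ℝ) T, i w + ∫ s in (0 : ℝ)..t, g s
      = i (w + ∫ s in (0 : ℝ)..t, v s) := by
    intro t ht
    have hsub : uIcc 0 t ⊆ Icc 0 T := by
      rw [uIcc_of_le ht.1]; exact Icc_subset_Icc_right ht.2
    rw [map_add, ← i.intervalIntegral_comp_comm (hvc.mono hsub).intervalIntegrable]
    congr 1
    exact intervalIntegral.integral_congr fun s hs => (hv s (hsub hs)).symm
  have hPc : ContinuousOn (fun t => w + ∫ s in (0 : ℝ)..t, v s) (Icc 0 T) := by
    apply continuousOn_const.add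
    by_cases hT : 0 ≤ T
    · have := intervalIntegral.continuousOn_primitive_interval (μ := volume) (f := v) (a := 0) (b := T)
        (by rw [uIcc_of_le hT]; exact hvc.integrableOn_Icc)
      rwa [uIcc_of_le hT] at this
    · rw [Icc_eq_empty hT]; exact continuousOn_empty _
  refine ⟨fun t ht => ?_, fun t₀ ht₀ => ?_⟩
  · rw [hint t ht, ← hM]; exact enorm_ne_top
  · have := hPc t₀ ht₀
    unfold ContinuousWithinAt at this
    rw [tendsto_iff_edist_tendsto_0] at this
    refine this.congr' ?_
    filter_upwards [self_mem_nhdsWithin] with t ht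
    rw [hint t ht, hint t₀ ht₀, edist_eq_enorm_sub, hM, map_sub]

theorem statement11
    -- the scale of Banach spaces, realised inside the ambient space `E = X_{amax}`
    (E : Type*) [NormedAddCommGroup E] [NormedSpace ℝ E] [CompleteSpace E]
    (amin amax : ℝ) (hamin : 0 < amin) (hminmax : amin < amax)
    (N : ℝ → E → ℝ≥0∞)
    (htop : ∀ x : E, N amax x = (‖x‖₊ : ℝ≥0∞))
    (hmono : ∀ a b : ℝ, amin ≤ a → a ≤ b → b ≤ amax → ∀ x : E, N b x ≤ N a x)
    (hzero : ∀ a : ℝ, amin ≤ a → a ≤ amax → N a 0 = 0)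
    (hadd : ∀ a : ℝ, amin ≤ a → a ≤ amax → ∀ x y : E, N a (x + y) ≤ N a x + N a y)
    (hsmul : ∀ a : ℝ, amin ≤ a → a ≤ amax → ∀ (c : ℝ) (x : E),
      N a (c • x) = (‖c‖₊ : ℝ≥0∞) * N a x)
    (hcomplete : ∀ a : ℝ, amin ≤ a → a ≤ amax → ∀ u : ℕ → E,
      (∀ n, N a (u n) ≠ ⊤) →
      (∀ ε : ℝ≥0∞, 0 < ε → ∃ K : ℕ, ∀ m ≥ K, ∀ n ≥ K, N a (u m - u n) < ε) →
      ∃ x : E, N a x ≠ ⊤ ∧ Tendsto (fun n => N a (u n - x)) atTop (nhds 0))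
    -- the Ovsjannikov map `F` of order `q` and constant `L`
    (q L : ℝ) (hq : 0 ≤ q) (hL : 0 < L) (F : E → E)
    (hFmap : ∀ a b : ℝ, amin ≤ a → a < b → b ≤ amax → ∀ x : E,
      N a x ≠ ⊤ → N b (F x) ≠ ⊤)
    (hFlip : ∀ a b : ℝ, amin ≤ a → a < b → b ≤ amax → ∀ x y : E,
      N a x ≠ ⊤ → N a y ≠ ⊤ →
      N b (F x - F y) ≤ ENNReal.ofReal (L / (b - a) ^ q) * N a (x - y))
    (T : ℝ) (hT : 0 < T) (x₀ : E) (hx₀ : N amin x₀ ≠ ⊤)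
    :
    ∀ n : ℕ, ∀ f : ℝ → E, ScaleContOn N amin T f →
      ∀ a : ℝ, amin < a → a < amax → ScaleContOn N a T ((Imap F x₀)^[n] f) := by
  have step : ∀ a b : ℝ, amin ≤ a → a < b → b ≤ amax → ∀ f : ℝ → E, ScaleContOn N a T f →
      ScaleContOn N b T (Imap F x₀ f) := by
    intro a b ha hab hb f hf
    have hb0 : amin ≤ b := ha.trans hab.le
    obtain ⟨V, _, _, _, i, hM, hex⟩ := exists_space E (N b)
      (fun x => by rw [← htop]; exact hmono b amax hb0 hb le_rfl x)
      (hzero b hb0 hb) (hadd b hb0 hb) (hsmul b hb0 hb) (hcomplete b hb0 hb)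
    refine cont_step E V (N b) i hM hex T x₀
      (ne_top_of_le_ne_top hx₀ (hmono amin b le_rfl hb0 hb x₀)) (fun s => F (f s))
      (fun t ht => hFmap a b ha hab hb _ (hf.1 t ht)) (fun t₀ ht₀ => ?_)
    have h1 := ENNReal.Tendsto.const_mul (a := ENNReal.ofReal (L / (b - a) ^ q)) (hf.2 t₀ ht₀)
      (Or.inr ENNReal.ofReal_ne_top)
    rw [mul_zero] at h1
    refine tendsto_of_tendsto_of_tendsto_of_le_of_le' tendsto_const_nhds h1
      (Eventually.of_forall fun _ => zero_le) ?_
    filter_upwards [self_mem_nhdsWithin] with t ht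
    exact hFlip a b ha hab hb _ _ (hf.1 t ht) (hf.1 t₀ ht₀)
  intro n f hf
  induction n with
  | zero =>
    intro a h1 h2
    refine ⟨fun t ht => ne_top_of_le_ne_top (hf.1 t ht) (hmono amin a le_rfl h1.le h2.le _),
      fun t₀ ht₀ => ?_⟩
    exact tendsto_of_tendsto_of_tendsto_of_le_of_le tendsto_const_nhds (hf.2 t₀ ht₀)
      (fun _ => zero_le) (fun t => hmono amin a le_rfl h1.le h2.le _)
  | succ n ih =>
    intro a h1 h2
    rw [Function.iterate_succ_apply']
    exact step ((amin + a) / 2) a (by linarith) (by linarith) h2.le _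
      (ih _ (by linarith) (by linarith))
end
end

section
/- Under the hypotheses of the comparison theorem (Q_{x,y} ≥ 0 with z ↦ Qz an Ovsjannikov map of order q < 1 and constant L on the scale {l¹_𝔞}_{𝔞∈[𝔞₋,𝔞₊]}, z ∈ l¹_{𝔞₋}, g : [0,T] → l¹_{𝔞₋} continuous with g_x(t) ≤ z_x + ∑_{y∈γ} Q_{x,y} ∫₀ᵗ g_y(s) ds for all x, t), assume additionally that z_x ≥ 0 for all x ∈ γ and g_x(t) ≥ 0 for all x ∈ γ and t ∈ [0,T]. Then for all 𝔞₋ ≤ α < β ≤ 𝔞₊ there is a constant K(α,β) = ∑_{n=0}^∞ LⁿTⁿ n^{qn} / ((β−α)^{qn} n!) such that ∑_{x∈γ} e^{−β|x|} sup_{t∈[0,T]} g_x(t) ≤ K(α,β) · ∑_{x∈γ} e^{−α|x|} z_x. -/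
open Set Filter Metric MeasureTheory

noncomputable def opQ {ι : Type*} (Q : ι → ι → ℝ) (v : ι → ℝ) : ι → ℝ :=
  fun x => ∑' y, Q x y * v y

def Mem1 {ι : Type*} (r : ι → ℝ) (a : ℝ) (v : ι → ℝ) : Prop :=
  Summable (fun x => Real.exp (-a * r x) * |v x|)

noncomputable def nrm {ι : Type*} (r : ι → ℝ) (a : ℝ) (v : ι → ℝ) : ℝ :=
  ∑' x, Real.exp (-a * r x) * |v x|

def Ovs {ι : Type*} (r : ι → ℝ) (amin amax q L : ℝ) (Q : ι → ι → ℝ) : Prop :=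
  ∀ α β : ℝ, amin ≤ α → α < β → β ≤ amax → ∀ v : ι → ℝ, Mem1 r α v →
    (∀ x, Summable (fun y => Q x y * v y)) ∧ Mem1 r β (opQ Q v) ∧
    nrm r β (opQ Q v) ≤ L / (β - α) ^ q * nrm r α v

theorem series_summable (q C : ℝ) (hq0 : 0 ≤ q) (hq1 : q < 1) (hC : 0 < C) :
    Summable (fun n : ℕ => C ^ n * (n : ℝ) ^ (q * n) / (n.factorial : ℝ)) := by
  have h1q : 0 < 1 - q := by linarith
  set E : ℝ := 2 * C * Real.exp q with hE
  have hEpos : 0 < E := by positivity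
  set D : ℝ := E ^ (1 / (1 - q)) with hD
  have hDpos : 0 < D := Real.rpow_pos_of_pos hEpos _
  have hDE : D ^ (1 - q) = E := by
    rw [hD, ← Real.rpow_mul hEpos.le, one_div, inv_mul_cancel₀ h1q.ne', Real.rpow_one]
  refine Summable.of_nonneg_of_le (g := fun n : ℕ => C ^ n * (n : ℝ) ^ (q * n) / (n.factorial : ℝ))
    (f := fun n : ℕ => (Real.exp D) ^ (1 - q) * (1 / 2 : ℝ) ^ n) (fun n => by positivity) ?_
    ((summable_geometric_of_lt_one (by norm_num) (by norm_num)).mul_left _)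
  intro n
  have hf : (0 : ℝ) < n.factorial := by positivity
  have h1 : (n : ℝ) ^ n ≤ Real.exp n * n.factorial := by
    have := Real.pow_div_factorial_le_exp (n : ℝ) (by positivity) n
    rwa [div_le_iff₀ hf] at this
  have h2 : (n : ℝ) ^ (q * n) ≤ Real.exp q ^ n * (n.factorial : ℝ) ^ q := by
    have e : (n : ℝ) ^ (q * n) = ((n : ℝ) ^ n) ^ q := by
      rw [← Real.rpow_natCast (n : ℝ) n, ← Real.rpow_mul (by positivity), mul_comm]
    rw [e]
    calc ((n : ℝ) ^ n) ^ q ≤ (Real.exp n * n.factorial) ^ q :=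
          Real.rpow_le_rpow (by positivity) h1 hq0
      _ = _ := by
          rw [Real.mul_rpow (by positivity) (by positivity), ← Real.exp_mul, ← Real.exp_nat_mul]
  have h3 : D ^ n / n.factorial ≤ Real.exp D := Real.pow_div_factorial_le_exp D hDpos.le n
  have h4 : E ^ n / (n.factorial : ℝ) ^ (1 - q) ≤ Real.exp D ^ (1 - q) := by
    have := Real.rpow_le_rpow (by positivity) h3 h1q.le
    rw [Real.div_rpow (by positivity) (by positivity)] at this
    have e : (D ^ n) ^ (1 - q) = E ^ n := by
      rw [← hDE, ← Real.rpow_natCast, ← Real.rpow_mul hDpos.le, ← Real.rpow_natCast,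
        ← Real.rpow_mul hDpos.le, mul_comm]
    rwa [e] at this
  have hfq : (n.factorial : ℝ) = (n.factorial : ℝ) ^ q * (n.factorial : ℝ) ^ (1 - q) := by
    rw [← Real.rpow_add hf]; simp
  have hp1 : 0 < (n.factorial : ℝ) ^ q := Real.rpow_pos_of_pos hf _
  have hp2 : 0 < (n.factorial : ℝ) ^ (1 - q) := Real.rpow_pos_of_pos hf _
  calc C ^ n * (n : ℝ) ^ (q * n) / (n.factorial : ℝ)
      ≤ C ^ n * (Real.exp q ^ n * (n.factorial : ℝ) ^ q) / (n.factorial : ℝ) := by gcongr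
    _ = E ^ n / (n.factorial : ℝ) ^ (1 - q) * (1 / 2 : ℝ) ^ n := by
        rw [div_mul_eq_mul_div, div_eq_div_iff hf.ne' hp2.ne', hE]
        have : (2 : ℝ) ^ n * (1 / 2 : ℝ) ^ n = 1 := by rw [← mul_pow]; norm_num
        rw [mul_pow, mul_pow]
        linear_combination (C ^ n * Real.exp q ^ n) * (-1 + 1 - (2 : ℝ) ^ n * (1 / 2 : ℝ) ^ n) * hfq
          + (-C ^ n * Real.exp q ^ n * ((n.factorial : ℝ) ^ q * (n.factorial : ℝ) ^ (1 - q))) * this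
    _ ≤ _ := by gcongr

section
variable {ι : Type*} {r : ι → ℝ} (hr : ∀ x, 0 ≤ r x)

theorem nrm_nonneg (a : ℝ) (v : ι → ℝ) : 0 ≤ nrm r a v :=
  tsum_nonneg fun _ => by positivity

theorem exp_anti {a b : ℝ} (hab : a ≤ b) {s : ℝ} (hs : 0 ≤ s) :
    Real.exp (-b * s) ≤ Real.exp (-a * s) := by
  apply Real.exp_le_exp.2; nlinarith

theorem Mem1.mono (hr : ∀ x, 0 ≤ r x) {a b : ℝ} (hab : a ≤ b) {v : ι → ℝ} (h : Mem1 r a v) :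
    Mem1 r b v :=
  Summable.of_nonneg_of_le (fun _ => by positivity)
    (fun x => mul_le_mul_of_nonneg_right (exp_anti hab (hr x)) (abs_nonneg _)) h

theorem nrm_mono (hr : ∀ x, 0 ≤ r x) {a b : ℝ} (hab : a ≤ b) {v : ι → ℝ} (h : Mem1 r a v) :
    nrm r b v ≤ nrm r a v :=
  Summable.tsum_le_tsum
    (fun x => mul_le_mul_of_nonneg_right (exp_anti hab (hr x)) (abs_nonneg _)) (h.mono hr hab) h

theorem Mem1.add {a : ℝ} {v w : ι → ℝ} (h : Mem1 r a v) (h' : Mem1 r a w) :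
    Mem1 r a (fun x => v x + w x) :=
  Summable.of_nonneg_of_le (fun _ => by positivity)
    (fun x => by
      rw [← mul_add]
      exact mul_le_mul_of_nonneg_left (abs_add_le _ _) (by positivity)) (Summable.add h h')

variable {amin amax q L : ℝ} {Q : ι → ι → ℝ}

theorem iter_bound (hQ : Ovs r amin amax q L Q) (hL : 0 < L) {α δ : ℝ} (hα : amin ≤ α) (hδ : 0 < δ)
    {v : ι → ℝ} (hv : Mem1 r α v) (k : ℕ) (hk : α + k * δ ≤ amax) :
    Mem1 r (α + k * δ) ((opQ Q)^[k] v) ∧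
      nrm r (α + k * δ) ((opQ Q)^[k] v) ≤ (L / δ ^ q) ^ k * nrm r α v := by
  induction k with
  | zero => simpa using hv
  | succ k ih =>
    push_cast at hk ⊢
    obtain ⟨h1, h2⟩ := ih (by nlinarith)
    rw [Function.iterate_succ_apply']
    obtain ⟨-, h3, h4⟩ := hQ (α + k * δ) (α + (k + 1) * δ) (by nlinarith [mul_nonneg (Nat.cast_nonneg (α := ℝ) k) hδ.le]) (by nlinarith) hk _ h1
    refine ⟨h3, h4.trans ?_⟩
    have : α + (k + 1) * δ - (α + k * δ) = δ := by ring
    rw [this, pow_succ', mul_assoc]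
    gcongr

theorem iter_bound' (hr : ∀ x, 0 ≤ r x) (hQ : Ovs r amin amax q L Q) (hL : 0 < L) {α β : ℝ}
    (hα : amin ≤ α) (hαβ : α < β) (hβ : β ≤ amax)
    {v : ι → ℝ} (hv : Mem1 r α v) (n : ℕ) :
    Mem1 r β ((opQ Q)^[n] v) ∧
      nrm r β ((opQ Q)^[n] v) ≤ (L / (β - α) ^ q) ^ n * (n : ℝ) ^ (q * n) * nrm r α v := by
  rcases Nat.eq_zero_or_pos n with rfl | hn
  · simpa using ⟨hv.mono hr hαβ.le, nrm_mono hr hαβ.le hv⟩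
  · have hn' : (0 : ℝ) < n := by exact_mod_cast hn
    have hd : 0 < β - α := by linarith
    have e : α + n * ((β - α) / n) = β := by field_simp; ring
    have := iter_bound hQ hL hα (δ := (β - α) / n) (by positivity) hv n (by rw [e]; exact hβ)
    rw [e] at this
    refine ⟨this.1, this.2.trans_eq ?_⟩
    rw [Real.div_rpow hd.le hn'.le, Real.rpow_mul hn'.le, Real.rpow_natCast, ← mul_pow]
    congr 2
    field_simp

def Good (r : ι → ℝ) (amin amax : ℝ) (v : ι → ℝ) : Prop :=
  ∀ a, amin < a → a ≤ amax → Mem1 r a v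

theorem Good.op (hQ : Ovs r amin amax q L Q) {v : ι → ℝ} (hv : Good r amin amax v) :
    Good r amin amax (opQ Q v) := fun a h1 h2 =>
  (hQ ((amin + a) / 2) a (by linarith) (by linarith) h2 v
    (hv _ (by linarith) (by linarith))).2.1

theorem Good.iter (hQ : Ovs r amin amax q L Q) {v : ι → ℝ} (hv : Good r amin amax v) (n : ℕ) :
    Good r amin amax ((opQ Q)^[n] v) := by
  induction n with
  | zero => exact hv
  | succ k ih => rw [Function.iterate_succ_apply']; exact ih.op hQ

theorem Good.row (hm : amin < amax) (hQ : Ovs r amin amax q L Q) {v : ι → ℝ}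
    (hv : Good r amin amax v) (x : ι) : Summable (fun y => Q x y * v y) :=
  (hQ ((amin + amax) / 2) amax (by linarith) (by linarith) le_rfl v
    (hv _ (by linarith) (by linarith))).1 x

theorem iter_nonneg (hQpos : ∀ x y, 0 ≤ Q x y) {v : ι → ℝ} (hv : ∀ x, 0 ≤ v x) (n : ℕ) (x : ι) :
    0 ≤ (opQ Q)^[n] v x := by
  induction n generalizing x with
  | zero => exact hv x
  | succ k ih =>
    rw [Function.iterate_succ_apply']
    exact tsum_nonneg fun y => mul_nonneg (hQpos x y) (ih y)

theorem compare_step (hm : amin < amax) (hQ : Ovs r amin amax q L Q) (hQpos : ∀ x y, 0 ≤ Q x y)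
    {T : ℝ} {z w : ι → ℝ} (hz : Good r amin amax z) (hw : Good r amin amax w)
    {g : ℝ → ι → ℝ} (hgc : ∀ x, ContinuousOn (fun t => g t x) (Icc 0 T))
    (hgG : ∀ t ∈ Icc (0 : ℝ) T, ∀ x, Summable (fun y => Q x y * ∫ s in (0 : ℝ)..t, g s y))
    (hgineq : ∀ x, ∀ t ∈ Icc (0 : ℝ) T, g t x ≤ z x + ∑' y, Q x y * ∫ s in (0 : ℝ)..t, g s y)
    (hgw : ∀ x, ∀ t ∈ Icc (0 : ℝ) T, g t x ≤ w x) (N : ℕ) :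
    ∀ x, ∀ t ∈ Icc (0 : ℝ) T, g t x ≤
      (∑ n ∈ Finset.range N, t ^ n / n.factorial * (opQ Q)^[n] z x)
        + t ^ N / N.factorial * (opQ Q)^[N] w x := by
  induction N with
  | zero => simpa using hgw
  | succ N ih =>
    intro x t ht
    have hint : ∀ (n : ℕ) (c : ℝ), ∫ s in (0 : ℝ)..t, s ^ n / n.factorial * c
        = t ^ (n + 1) / (n + 1).factorial * c := by
      intro n c
      rw [intervalIntegral.integral_mul_const, intervalIntegral.integral_div, integral_pow,
        Nat.factorial_succ]
      push_cast
      have : (n.factorial : ℝ) ≠ 0 := by positivity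
      field_simp
      simp
    have hI : ∀ y, ∫ s in (0 : ℝ)..t, g s y ≤
        (∑ n ∈ Finset.range N, t ^ (n + 1) / (n + 1).factorial * (opQ Q)^[n] z y)
        + t ^ (N + 1) / (N + 1).factorial * (opQ Q)^[N] w y := by
      intro y
      have hsub : Icc 0 t ⊆ Icc 0 T := Icc_subset_Icc_right ht.2
      calc ∫ s in (0 : ℝ)..t, g s y ≤ ∫ s in (0 : ℝ)..t,
            ((∑ n ∈ Finset.range N, s ^ n / n.factorial * (opQ Q)^[n] z y)
              + s ^ N / N.factorial * (opQ Q)^[N] w y) := by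
            apply intervalIntegral.integral_mono_on ht.1
            · apply ContinuousOn.intervalIntegrable
              rw [uIcc_of_le ht.1]; exact (hgc y).mono hsub
            · apply Continuous.intervalIntegrable; fun_prop
            · intro s hs; exact ih y s (hsub hs)
        _ = _ := by
            rw [intervalIntegral.integral_add, intervalIntegral.integral_finsetSum]
            · simp only [hint]
            · intro i _; apply Continuous.intervalIntegrable; fun_prop
            · apply Continuous.intervalIntegrable; fun_prop
            · apply Continuous.intervalIntegrable; fun_prop
    have hS : HasSum (fun y => Q x y *
        ((∑ n ∈ Finset.range N, t ^ (n + 1) / (n + 1).factorial * (opQ Q)^[n] z y)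
        + t ^ (N + 1) / (N + 1).factorial * (opQ Q)^[N] w y))
        ((∑ n ∈ Finset.range N, t ^ (n + 1) / (n + 1).factorial * (opQ Q)^[n + 1] z x)
        + t ^ (N + 1) / (N + 1).factorial * (opQ Q)^[N + 1] w x) := by
      have A : ∀ n : ℕ, ∀ v : ι → ℝ, Good r amin amax v →
          HasSum (fun y => t ^ (n + 1) / (n + 1).factorial * (Q x y * (opQ Q)^[n] v y))
            (t ^ (n + 1) / (n + 1).factorial * (opQ Q)^[n + 1] v x) := by
        intro n v hv
        rw [Function.iterate_succ_apply']
        exact ((hv.iter hQ n).row hm hQ x).hasSum.mul_left _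
      have := (hasSum_sum (s := Finset.range N) (fun n _ => A n z hz)).add (A N w hw)
      convert this using 2 with y
      rw [mul_add, Finset.mul_sum]
      congr 1
      · exact Finset.sum_congr rfl fun _ _ => by ring
      · ring
    have h1 : ∑' y, Q x y * ∫ s in (0 : ℝ)..t, g s y ≤ _ :=
      hasSum_le (fun y => mul_le_mul_of_nonneg_left (hI y) (hQpos x y)) (hgG t ht x).hasSum hS
    have h2 := hgineq x t ht
    rw [Finset.sum_range_succ']
    simp only [pow_zero, Nat.factorial_zero, Nat.cast_one, div_one, one_mul,
      Function.iterate_zero, id]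
    linarith

theorem main_gen (hr : ∀ x, 0 ≤ r x) (hm : amin < amax) (hQ : Ovs r amin amax q L Q)
    (hQpos : ∀ x y, 0 ≤ Q x y) (hq0 : 0 ≤ q) (hq1 : q < 1) (hL : 0 < L)
    {T : ℝ} (hT : 0 < T) {z : ι → ℝ} (hz : Mem1 r amin z) (hznn : ∀ x, 0 ≤ z x)
    {g : ℝ → ι → ℝ} (hgmem : ∀ t ∈ Icc (0 : ℝ) T, Mem1 r amin (g t))
    (hgcont : ∀ t₀ ∈ Icc (0 : ℝ) T,
      Tendsto (fun t => nrm r amin (fun x => g t x - g t₀ x))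
        (nhdsWithin t₀ (Icc (0 : ℝ) T)) (nhds 0))
    (hgineq : ∀ x, ∀ t ∈ Icc (0 : ℝ) T, g t x ≤ z x + ∑' y, Q x y * ∫ s in (0 : ℝ)..t, g s y)
    (hgnn : ∀ x, ∀ t ∈ Icc (0 : ℝ) T, 0 ≤ g t x)
    {α β : ℝ} (hα : amin ≤ α) (hαβ : α < β) (hβ : β ≤ amax) (F : Finset ι) :
    ∑ x ∈ F, Real.exp (-β * r x) * (⨆ t : Icc (0 : ℝ) T, g t x) ≤
      (∑' n : ℕ, L ^ n * T ^ n * (n : ℝ) ^ (q * n) / ((β - α) ^ (q * n) * (n.factorial : ℝ)))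
        * nrm r α z := by
  have hdm : ∀ t ∈ Icc (0 : ℝ) T, ∀ t₀ ∈ Icc (0 : ℝ) T,
      Mem1 r amin (fun x => g t x - g t₀ x) := by
    intro t ht t₀ ht₀
    refine Summable.of_nonneg_of_le (fun _ => by positivity) (fun x => ?_)
      (Summable.add (hgmem t ht) (hgmem t₀ ht₀))
    rw [← mul_add]
    exact mul_le_mul_of_nonneg_left (abs_sub _ _) (by positivity)
  -- componentwise continuity
  have hgc : ∀ x, ContinuousOn (fun t => g t x) (Icc 0 T) := by
    intro x t₀ ht₀
    rw [ContinuousWithinAt, tendsto_iff_dist_tendsto_zero]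
    have := (hgcont t₀ ht₀).const_mul (Real.exp (amin * r x))
    rw [mul_zero] at this
    refine squeeze_zero' (Eventually.of_forall fun _ => dist_nonneg) ?_ this
    filter_upwards [self_mem_nhdsWithin] with t ht
    have h := (hdm t ht t₀ ht₀).le_tsum x (fun _ _ => by positivity)
    calc dist (g t x) (g t₀ x)
        = Real.exp (amin * r x) * (Real.exp (-amin * r x) * |g t x - g t₀ x|) := by
          rw [← mul_assoc, ← Real.exp_add, Real.dist_eq]; simp
      _ ≤ _ := mul_le_mul_of_nonneg_left h (by positivity)
  -- continuity of the norm
  have hnc : ContinuousOn (fun t => nrm r amin (g t)) (Icc 0 T) := by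
    intro t₀ ht₀
    rw [ContinuousWithinAt, tendsto_iff_dist_tendsto_zero]
    refine squeeze_zero' (Eventually.of_forall fun _ => dist_nonneg) ?_ (hgcont t₀ ht₀)
    filter_upwards [self_mem_nhdsWithin] with t ht
    rw [Real.dist_eq]
    unfold nrm
    rw [← Summable.tsum_sub (hgmem t ht) (hgmem t₀ ht₀), ← Real.norm_eq_abs]
    have hle : ∀ x, ‖Real.exp (-amin * r x) * |g t x| - Real.exp (-amin * r x) * |g t₀ x|‖
        ≤ Real.exp (-amin * r x) * |g t x - g t₀ x| := by
      intro x
      rw [← mul_sub, norm_mul, Real.norm_eq_abs, Real.abs_exp]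
      exact mul_le_mul_of_nonneg_left (abs_abs_sub_abs_le _ _) (by positivity)
    exact tsum_of_norm_bounded (hdm t ht t₀ ht₀).hasSum hle
  obtain ⟨M, hM⟩ := isCompact_Icc.bddAbove_image hnc
  have hM' : ∀ t ∈ Icc (0 : ℝ) T, nrm r amin (g t) ≤ M := fun t ht => hM ⟨t, ht, rfl⟩
  have hii : ∀ x, ∀ t ∈ Icc (0 : ℝ) T, IntervalIntegrable (fun s => g s x) volume 0 t := by
    intro x t ht
    apply ContinuousOn.intervalIntegrable
    rw [uIcc_of_le ht.1]; exact (hgc x).mono (Icc_subset_Icc_right ht.2)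
  have hGnn : ∀ x, ∀ t ∈ Icc (0 : ℝ) T, 0 ≤ ∫ s in (0 : ℝ)..t, g s x := by
    intro x t ht
    exact intervalIntegral.integral_nonneg ht.1 fun s hs => hgnn x s ⟨hs.1, hs.2.trans ht.2⟩
  have hGmem : ∀ t ∈ Icc (0 : ℝ) T, Mem1 r amin (fun x => ∫ s in (0 : ℝ)..t, g s x) := by
    intro t ht
    refine summable_of_sum_le (c := t * M) (fun _ => by positivity) fun u => ?_
    calc ∑ x ∈ u, Real.exp (-amin * r x) * |∫ s in (0 : ℝ)..t, g s x|
        = ∫ s in (0 : ℝ)..t, ∑ x ∈ u, Real.exp (-amin * r x) * g s x := by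
          rw [intervalIntegral.integral_finsetSum]
          · refine Finset.sum_congr rfl fun x _ => ?_
            rw [abs_of_nonneg (hGnn x t ht), intervalIntegral.integral_const_mul]
          · intro x _; exact (hii x t ht).const_mul _
      _ ≤ ∫ s in (0 : ℝ)..t, M := by
          apply intervalIntegral.integral_mono_on ht.1
          · apply ContinuousOn.intervalIntegrable
            rw [uIcc_of_le ht.1]
            exact continuousOn_finsetSum u fun x _ =>
              ((hgc x).mono (Icc_subset_Icc_right ht.2)).const_mul _
          · simp
          · intro s hs
            have hs' : s ∈ Icc (0 : ℝ) T := ⟨hs.1, hs.2.trans ht.2⟩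
            refine le_trans ?_ (hM' s hs')
            refine le_trans (Finset.sum_le_sum fun x _ => ?_)
              ((hgmem s hs').sum_le_tsum u (fun _ _ => by positivity))
            exact mul_le_mul_of_nonneg_left (le_abs_self _) (by positivity)
      _ = t * M := by simp
  have hrow : ∀ t ∈ Icc (0 : ℝ) T, ∀ x, Summable (fun y => Q x y * ∫ s in (0 : ℝ)..t, g s y) :=
    fun t ht x => (hQ amin amax le_rfl hm le_rfl _ (hGmem t ht)).1 x
  have hTT : T ∈ Icc (0 : ℝ) T := ⟨hT.le, le_rfl⟩
  have hzg : Good r amin amax z := fun a h _ => hz.mono hr h.le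
  set G : ι → ℝ := fun x => ∫ s in (0 : ℝ)..T, g s x with hG
  have hGg : Good r amin amax G := fun a h _ => (hGmem T hTT).mono hr h.le
  set w : ι → ℝ := fun x => z x + opQ Q G x with hw
  have hwg : Good r amin amax w := fun a h h' => (hzg a h h').add (hGg.op hQ a h h')
  have hwnn : ∀ x, 0 ≤ w x := fun x => add_nonneg (hznn x)
    (tsum_nonneg fun y => mul_nonneg (hQpos x y) (hGnn y T hTT))
  have hgw : ∀ x, ∀ t ∈ Icc (0 : ℝ) T, g t x ≤ w x := by
    intro x t ht
    refine (hgineq x t ht).trans ?_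
    have : ∑' y, Q x y * ∫ s in (0 : ℝ)..t, g s y ≤ opQ Q G x := by
      refine Summable.tsum_le_tsum (fun y => mul_le_mul_of_nonneg_left ?_ (hQpos x y))
        (hrow t ht x) (hrow T hTT x)
      refine intervalIntegral.integral_mono_interval le_rfl ht.1 ht.2 ?_ (hii y T hTT)
      refine (ae_restrict_iff' measurableSet_Ioc).2 (Eventually.of_forall fun s hs => ?_)
      exact hgnn y s ⟨hs.1.le, hs.2⟩
    simp only [hw]; linarith
  have hcmp := compare_step hm hQ hQpos hzg hwg hgc hrow hgineq hgw
  haveI : Nonempty (Icc (0 : ℝ) T) := ⟨⟨T, hTT⟩⟩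
  have hsup : ∀ N : ℕ, ∀ x, (⨆ t : Icc (0 : ℝ) T, g t x) ≤
      (∑ n ∈ Finset.range N, T ^ n / n.factorial * (opQ Q)^[n] z x)
        + T ^ N / N.factorial * (opQ Q)^[N] w x := by
    intro N x
    refine ciSup_le fun t => (hcmp N x t t.2).trans ?_
    have h0 := t.2.1
    have h1 := t.2.2
    gcongr
    · exact iter_nonneg hQpos hznn _ _
    · exact iter_nonneg hQpos hwnn _ _
  -- sums against the weight
  have hfin : ∀ (v : ι → ℝ) (n : ℕ) (a : ℝ), amin ≤ a → a < β → Mem1 r a v →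
      T ^ n / n.factorial * ∑ x ∈ F, Real.exp (-β * r x) * (opQ Q)^[n] v x ≤
        (L ^ n * T ^ n * (n : ℝ) ^ (q * n) / ((β - a) ^ (q * n) * (n.factorial : ℝ)))
          * nrm r a v := by
    intro v n a ha hab hv
    obtain ⟨h1, h2⟩ := iter_bound' hr hQ hL ha hab hβ hv n
    have h3 : ∑ x ∈ F, Real.exp (-β * r x) * (opQ Q)^[n] v x ≤ nrm r β ((opQ Q)^[n] v) := by
      refine le_trans (Finset.sum_le_sum fun x _ => ?_)
        (h1.sum_le_tsum F (fun _ _ => by positivity))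
      exact mul_le_mul_of_nonneg_left (le_abs_self _) (by positivity)
    have hd : 0 < β - a := by linarith
    calc _ ≤ T ^ n / n.factorial * ((L / (β - a) ^ q) ^ n * (n : ℝ) ^ (q * n) * nrm r a v) := by
          gcongr; exact h3.trans h2
      _ = _ := by
          rw [div_pow, Real.rpow_mul hd.le, Real.rpow_natCast]
          have : 0 < (β - a) ^ q := Real.rpow_pos_of_pos hd _
          field_simp
  have hKs : ∀ a, a < β → Summable (fun n : ℕ =>
      L ^ n * T ^ n * (n : ℝ) ^ (q * n) / ((β - a) ^ (q * n) * (n.factorial : ℝ))) := by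
    intro a ha
    have hd : 0 < β - a := by linarith
    have hdq : 0 < (β - a) ^ q := Real.rpow_pos_of_pos hd _
    convert series_summable q (L * T / (β - a) ^ q) hq0 hq1 (by positivity) using 2 with n
    rw [div_pow, mul_pow, Real.rpow_mul hd.le (y := q), Real.rpow_natCast]
    field_simp
  set a' := (amin + β) / 2 with ha'
  have hβm : amin < β := by linarith
  have hwm : Mem1 r a' w := hwg a' (by linarith) (by linarith)
  have hbd : ∀ N : ℕ, ∑ x ∈ F, Real.exp (-β * r x) * (⨆ t : Icc (0 : ℝ) T, g t x) ≤
      (∑' n : ℕ, L ^ n * T ^ n * (n : ℝ) ^ (q * n) / ((β - α) ^ (q * n) * (n.factorial : ℝ)))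
        * nrm r α z + (L ^ N * T ^ N * (N : ℝ) ^ (q * N) / ((β - a') ^ (q * N) * (N.factorial : ℝ)))
          * nrm r a' w := by
    intro N
    calc _ ≤ ∑ x ∈ F, Real.exp (-β * r x) *
          ((∑ n ∈ Finset.range N, T ^ n / n.factorial * (opQ Q)^[n] z x)
          + T ^ N / N.factorial * (opQ Q)^[N] w x) := by
          gcongr with x _; exact hsup N x
      _ = (∑ n ∈ Finset.range N, T ^ n / n.factorial *
            ∑ x ∈ F, Real.exp (-β * r x) * (opQ Q)^[n] z x)
          + T ^ N / N.factorial * ∑ x ∈ F, Real.exp (-β * r x) * (opQ Q)^[N] w x := by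
          simp only [mul_add, Finset.sum_add_distrib, Finset.mul_sum]
          rw [Finset.sum_comm]
          congr 1
          · exact Finset.sum_congr rfl fun _ _ => Finset.sum_congr rfl fun _ _ => by ring
          · exact Finset.sum_congr rfl fun _ _ => by ring
      _ ≤ (∑ n ∈ Finset.range N,
            L ^ n * T ^ n * (n : ℝ) ^ (q * n) / ((β - α) ^ (q * n) * (n.factorial : ℝ))
              * nrm r α z) + _ :=
          add_le_add (Finset.sum_le_sum fun n _ => hfin z n α hα hαβ (hz.mono hr hα))
            (hfin w N a' (by linarith) (by linarith) hwm)
      _ ≤ _ := by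
          rw [← Finset.sum_mul]
          have hd : 0 < β - α := by linarith
          have := (hKs α hαβ).sum_le_tsum (Finset.range N) (fun n _ => by positivity)
          have h0 := nrm_nonneg (r := r) α z
          gcongr
  have hlim := ((hKs a' (by linarith)).tendsto_atTop_zero.mul_const (nrm r a' w)).const_add
    ((∑' n : ℕ, L ^ n * T ^ n * (n : ℝ) ^ (q * n) / ((β - α) ^ (q * n) * (n.factorial : ℝ)))
        * nrm r α z)
  rw [zero_mul, add_zero] at hlim
  exact ge_of_tendsto' hlim hbd

end

theorem statement17 (d : ℕ) (γ : Set (EuclideanSpace ℝ (Fin d)))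
    (hloc : ∀ K : Set (EuclideanSpace ℝ (Fin d)), IsCompact K → (γ ∩ K).Finite)
    (amin amax : ℝ) (hamin : 0 < amin) (hminmax : amin < amax)
    (T : ℝ) (hT : 0 < T)
    (z : γ → ℝ)
    (hz : Summable (fun x : γ =>
      Real.exp (-amin * ‖(x : EuclideanSpace ℝ (Fin d))‖) * |z x|))
    (Q : γ → γ → ℝ) (hQpos : ∀ x y : γ, 0 ≤ Q x y)
    (q L : ℝ) (hq0 : 0 ≤ q) (hq1 : q < 1) (hL : 0 < L)
    -- `v ↦ Qv` is an Ovsjannikov map of order `q` and constant `L` on the scale `{l¹_𝔞}`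
    (hQovs : ∀ α β : ℝ, amin ≤ α → α < β → β ≤ amax → ∀ v : γ → ℝ,
      Summable (fun x : γ =>
        Real.exp (-α * ‖(x : EuclideanSpace ℝ (Fin d))‖) * |v x|) →
      (∀ x : γ, Summable (fun y : γ => Q x y * v y)) ∧
      Summable (fun x : γ => Real.exp (-β * ‖(x : EuclideanSpace ℝ (Fin d))‖) *
        |∑' y : γ, Q x y * v y|) ∧
      (∑' x : γ, Real.exp (-β * ‖(x : EuclideanSpace ℝ (Fin d))‖) *
          |∑' y : γ, Q x y * v y|) ≤
        L / (β - α) ^ q *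
          ∑' x : γ, Real.exp (-α * ‖(x : EuclideanSpace ℝ (Fin d))‖) * |v x|)
    -- `g` is continuous into `l¹_{𝔞₋}` and satisfies the componentwise inequality
    (g : ℝ → γ → ℝ)
    (hgmem : ∀ t ∈ Icc (0 : ℝ) T,
      Summable (fun x : γ =>
        Real.exp (-amin * ‖(x : EuclideanSpace ℝ (Fin d))‖) * |g t x|))
    (hgcont : ∀ t₀ ∈ Icc (0 : ℝ) T,
      Tendsto (fun t => ∑' x : γ,
          Real.exp (-amin * ‖(x : EuclideanSpace ℝ (Fin d))‖) * |g t x - g t₀ x|)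
        (nhdsWithin t₀ (Icc (0 : ℝ) T)) (nhds 0))
    (hgineq : ∀ x : γ, ∀ t ∈ Icc (0 : ℝ) T,
      g t x ≤ z x + ∑' y : γ, Q x y * ∫ s in (0 : ℝ)..t, g s y)
    -- nonnegativity assumptions
    (hznn : ∀ x : γ, 0 ≤ z x)
    (hgnn : ∀ x : γ, ∀ t ∈ Icc (0 : ℝ) T, 0 ≤ g t x) :
    ∀ α β : ℝ, amin ≤ α → α < β → β ≤ amax →
      Summable (fun x : γ => Real.exp (-β * ‖(x : EuclideanSpace ℝ (Fin d))‖) *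
        ⨆ t : Icc (0 : ℝ) T, g t x) ∧
      (∑' x : γ, Real.exp (-β * ‖(x : EuclideanSpace ℝ (Fin d))‖) *
          ⨆ t : Icc (0 : ℝ) T, g t x) ≤
        (∑' n : ℕ, L ^ n * T ^ n * (n : ℝ) ^ (q * n) /
            ((β - α) ^ (q * n) * (n.factorial : ℝ))) *
          ∑' x : γ, Real.exp (-α * ‖(x : EuclideanSpace ℝ (Fin d))‖) * z x := by
  have hr : ∀ x : γ, 0 ≤ ‖(x : EuclideanSpace ℝ (Fin d))‖ := fun x => norm_nonneg _
  intro α β hα hαβ hβ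
  have key := main_gen (r := fun x : γ => ‖(x : EuclideanSpace ℝ (Fin d))‖) hr hminmax
    (show Ovs _ amin amax q L Q from hQovs) hQpos hq0 hq1 hL hT hz hznn hgmem hgcont hgineq hgnn
    hα hαβ hβ
  have hnz : nrm (fun x : γ => ‖(x : EuclideanSpace ℝ (Fin d))‖) α z =
      ∑' x : γ, Real.exp (-α * ‖(x : EuclideanSpace ℝ (Fin d))‖) * z x := by
    unfold nrm
    simp only [abs_of_nonneg (hznn _)]
  rw [hnz] at key
  have hnn : ∀ x : γ, 0 ≤ Real.exp (-β * ‖(x : EuclideanSpace ℝ (Fin d))‖) *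
        ⨆ t : Icc (0 : ℝ) T, g t x := fun x =>
    mul_nonneg (Real.exp_pos _).le (Real.iSup_nonneg fun t => hgnn x t t.2)
  have hs := summable_of_sum_le hnn key
  exact ⟨hs, hs.tsum_le_of_sum_le key⟩
end
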